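/- Let k be a positive integer and let G be a finite connected simple graph with minimum degree δ(G), maximum degree Δ(G) ≥ k + 2, and order n(G). Then F_k(G) ≤ ((Δ(G) − k − 1)·n(G) + max{δ(G)·(k + 1 − Δ(G)) + k, k·(δ(G) − Δ(G) + 2)}) / (Δ(G) − 1). -/

import Mathlib

/-- One step of the `k`-forcing color change process: a colored vertex (in `S`)
with at most `k` non-colored neighbors causes all of its neighbors to become colored. -/
def kStep {V : Type*} [Fintype V] [DecidableEq V] (G : SimpleGraph V) [DecidableRel G.Adj]
    (k : ℕ) (S : Finset V) : Finset V :=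
  S ∪ Finset.univ.filter (fun v => ∃ u ∈ S, G.Adj u v ∧ (G.neighborFinset u \ S).card ≤ k)

/-- `S` is a `k`-forcing set if iterating the color change rule starting from `S`
eventually colors all vertices of `G`. -/
def IsKForcingSet {V : Type*} [Fintype V] [DecidableEq V] (G : SimpleGraph V)
    [DecidableRel G.Adj] (k : ℕ) (S : Finset V) : Prop :=
  ∃ n : ℕ, (kStep G k)^[n] S = Finset.univ

/-- The `k`-forcing number `F_k(G)`: the minimum cardinality of a `k`-forcing set. -/
noncomputable def kForcingNumber {V : Type*} [Fintype V] [DecidableEq V] (G : SimpleGraph V)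
    [DecidableRel G.Adj] (k : ℕ) : ℕ :=
  sInf {m | ∃ S : Finset V, S.card = m ∧ IsKForcingSet G k S}

/-!
Grow a colored set `C` greedily, starting from a closed neighborhood `{v} ∪ N(v)`. While `C` is not
everything, connectivity gives some `u ∈ C` with `r ≥ 1` neighbors outside `C`; adding `r - k`
(or `0`, if `r ≤ k`) of them to the initial set lets `u` force all the others. Every vertex of `C`
keeps a neighbor in `C`, so `r ≤ Δ - 1`, and hence at most a fraction `(Δ - k - 1) / (Δ - 1)` of the
newly colored vertices has to be paid for. Writing `a = Δ - k - 1`, this says that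
`(a + k) * #S - a * #C` never increases, where `S` is the initial set that forces `C`.
The closed neighborhood of a vertex of degree `d` costs `1 + max (d - k) 0` vertices; the cases
`d ≤ k` and `k ≤ d` give the two terms of the maximum in the bound.
-/

section Graph

open Finset

variable {V : Type*} {G : SimpleGraph V} {C : Finset V} {u v w : V}

theorem exists_adj_mem_notMem_of_preconnected (hG : G.Preconnected) {s : Set V}
    (hne : s.Nonempty) (hs : s ≠ Set.univ) : ∃ u ∈ s, ∃ w ∉ s, G.Adj u w := by
  obtain ⟨x, hx⟩ := hne
  obtain ⟨y, hy⟩ := (Set.ne_univ_iff_exists_notMem s).1 hs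
  obtain ⟨p⟩ := hG x y
  obtain ⟨d, -, hfst, hsnd⟩ := p.exists_boundary_dart s hx hy
  exact ⟨d.fst, hfst, d.snd, hsnd, d.adj⟩

theorem card_neighborFinset_sdiff_lt_degree [DecidableEq V] [Fintype (G.neighborSet u)]
    (huw : G.Adj u w) (hw : w ∈ C) : #(G.neighborFinset u \ C) < G.degree u := by
  rw [← G.card_neighborFinset_eq_degree]
  exact card_lt_card ((ssubset_iff_of_subset sdiff_subset).2 ⟨w, by simpa, by simp [hw]⟩)

/-- The induced subgraph `G[C]` has no isolated vertex. This is the invariant of the greedy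
process that leaves every vertex of `C` at most `Δ - 1` neighbors outside `C`. -/
def NoIsolated (G : SimpleGraph V) (C : Finset V) : Prop :=
  ∀ v ∈ C, ∃ w ∈ C, G.Adj v w

theorem NoIsolated.union_neighborFinset [DecidableEq V] [Fintype (G.neighborSet u)]
    (hC : NoIsolated G C) (hu : u ∈ C) : NoIsolated G (C ∪ G.neighborFinset u) := by
  intro x hx
  rcases mem_union.1 hx with hx | hx
  · obtain ⟨w, hw, hxw⟩ := hC x hx
    exact ⟨w, mem_union_left _ hw, hxw⟩
  · exact ⟨u, mem_union_left _ hu, ((G.mem_neighborFinset u x).1 hx).symm⟩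

theorem noIsolated_singleton_union_neighborFinset [DecidableEq V] [Fintype (G.neighborSet v)]
    (hv : 0 < G.degree v) : NoIsolated G ({v} ∪ G.neighborFinset v) := by
  obtain ⟨w, hvw⟩ := (G.degree_pos_iff_exists_adj v).1 hv
  intro x hx
  rcases mem_union.1 hx with hx | hx
  · exact ⟨w, by simp [hvw], mem_singleton.1 hx ▸ hvw⟩
  · exact ⟨v, by simp, ((G.mem_neighborFinset v x).1 hx).symm⟩

end Graph

theorem add_mul_tsub_le_mul {a k r : ℕ} (hr : r ≤ a + k) : (a + k) * (r - k) ≤ a * r := by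
  rcases le_total r k with hrk | hkr
  · simp [Nat.sub_eq_zero_of_le hrk]
  · obtain ⟨e, rfl⟩ := Nat.exists_eq_add_of_le hkr
    have he : k * e ≤ k * a := by gcongr; lia
    rw [Nat.add_sub_cancel_left]
    linarith

theorem add_mul_one_add_tsub_le_max (a k d : ℕ) :
    ((a + k) * (1 + (d - k : ℕ)) : ℝ) ≤
      a * (1 + d) + max (k - d * a : ℝ) (k * (d - k - a + 1)) := by
  rcases le_total d k with hdk | hkd
  · rw [Nat.sub_eq_zero_of_le hdk, Nat.cast_zero]
    linarith [le_max_left (k - d * a : ℝ) (k * (d - k - a + 1))]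
  · rw [Nat.cast_sub hkd]
    linarith [le_max_right (k - d * a : ℝ) (k * (d - k - a + 1))]

section KForcing

open Finset

variable {V : Type*} [Fintype V] [DecidableEq V] {G : SimpleGraph V} [DecidableRel G.Adj]
  {a k : ℕ} {S C : Finset V} {u v w : V}

theorem kStep_mono (G : SimpleGraph V) [DecidableRel G.Adj] (k : ℕ) : Monotone (kStep G k) := by
  refine fun S T hST ↦ union_subset_union hST (monotone_filter_right _ fun v _ ↦ ?_)
  rintro ⟨u, hu, huv, hcard⟩
  exact ⟨u, hST hu, huv, (card_le_card (sdiff_subset_sdiff Subset.rfl hST)).trans hcard⟩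

theorem subset_iterate_kStep (G : SimpleGraph V) [DecidableRel G.Adj] (k n : ℕ) (S : Finset V) :
    S ⊆ (kStep G k)^[n] S :=
  Function.id_le_iterate_of_id_le (fun _ ↦ subset_union_left) n S

theorem neighborFinset_subset_kStep (hu : u ∈ S) (hcard : #(G.neighborFinset u \ S) ≤ k) :
    G.neighborFinset u ⊆ kStep G k S := fun v hv ↦
  mem_union_right _ (mem_filter.2 ⟨mem_univ v, u, hu, (G.mem_neighborFinset u v).1 hv, hcard⟩)

theorem IsKForcingSet.kForcingNumber_le_card (hS : IsKForcingSet G k S) :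
    kForcingNumber G k ≤ #S :=
  Nat.sInf_le ⟨S, rfl, hS⟩

/-- The `k`-forcing process started at `S` eventually colors every vertex of `C`. This relative
version of `IsKForcingSet` describes the intermediate stages of the greedy process. -/
def KForces (G : SimpleGraph V) [DecidableRel G.Adj] (k : ℕ) (S C : Finset V) : Prop :=
  ∃ n : ℕ, C ⊆ (kStep G k)^[n] S

namespace KForces

theorem refl (G : SimpleGraph V) [DecidableRel G.Adj] (k : ℕ) (S : Finset V) : KForces G k S S :=
  ⟨0, Subset.rfl⟩

theorem isKForcingSet (h : KForces G k S univ) : IsKForcingSet G k S :=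
  h.imp fun _ ↦ univ_subset_iff.1

theorem union_right (h : KForces G k S C) (A : Finset V) : KForces G k (S ∪ A) (C ∪ A) := by
  obtain ⟨n, hn⟩ := h
  exact ⟨n, union_subset (hn.trans ((kStep_mono G k).iterate n subset_union_left))
    (subset_union_right.trans (subset_iterate_kStep G k n _))⟩

theorem union_neighborFinset (h : KForces G k S C) (hu : u ∈ C)
    (hcard : #(G.neighborFinset u \ C) ≤ k) : KForces G k S (C ∪ G.neighborFinset u) := by
  obtain ⟨n, hn⟩ := h
  refine ⟨n + 1, ?_⟩
  rw [Function.iterate_succ_apply']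
  exact union_subset (hn.trans subset_union_left) (neighborFinset_subset_kStep (hn hu)
    ((card_le_card (sdiff_subset_sdiff Subset.rfl hn)).trans hcard))

theorem exists_card_le (h : KForces G k S C) (hu : u ∈ C) :
    ∃ S', #S' ≤ #S + (#(G.neighborFinset u \ C) - k) ∧
      KForces G k S' (C ∪ G.neighborFinset u) := by
  obtain ⟨A, hA, hAcard⟩ := exists_subset_card_eq (Nat.sub_le #(G.neighborFinset u \ C) k)
  have hrest : #(G.neighborFinset u \ (C ∪ A)) ≤ k := by
    rw [← sup_eq_union, ← sdiff_sdiff_left, card_sdiff_of_subset hA]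
    lia
  have hAN : A ⊆ G.neighborFinset u := hA.trans sdiff_subset
  refine ⟨S ∪ A, hAcard ▸ card_union_le S A, ?_⟩
  simpa only [union_assoc, union_eq_right.2 hAN] using
    (h.union_right A).union_neighborFinset (mem_union_left A hu) hrest

theorem exists_mul_card_add_le (h : KForces G k S C) (hu : u ∈ C)
    (hdeg : G.degree u ≤ a + k + 1) (hw : w ∈ C) (huw : G.Adj u w) :
    ∃ S', KForces G k S' (C ∪ G.neighborFinset u) ∧
      (a + k) * #S' + a * #C ≤ (a + k) * #S + a * #(C ∪ G.neighborFinset u) := by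
  obtain ⟨S', hcard, hS'⟩ := h.exists_card_le hu
  have hr : #(G.neighborFinset u \ C) ≤ a + k :=
    Nat.le_of_lt_succ ((card_neighborFinset_sdiff_lt_degree huw hw).trans_le hdeg)
  have hunion : #(G.neighborFinset u \ C) + #C = #(C ∪ G.neighborFinset u) := by
    rw [card_sdiff_add_card, union_comm]
  refine ⟨S', hS', ?_⟩
  calc
    (a + k) * #S' + a * #C
      ≤ (a + k) * (#S + (#(G.neighborFinset u \ C) - k)) + a * #C := by gcongr
    _ = (a + k) * #S + ((a + k) * (#(G.neighborFinset u \ C) - k) + a * #C) := by ring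
    _ ≤ (a + k) * #S + (a * #(G.neighborFinset u \ C) + a * #C) := by
      gcongr _ + (?_ + _)
      exact add_mul_tsub_le_mul hr
    _ = (a + k) * #S + a * #(C ∪ G.neighborFinset u) := by rw [← mul_add, hunion]

theorem mul_kForcingNumber_add_mul_card_le (h : KForces G k S C) (hG : G.Preconnected)
    (hdeg : ∀ v, G.degree v ≤ a + k + 1) (hne : C.Nonempty) (hC : NoIsolated G C) :
    (a + k) * kForcingNumber G k + a * #C ≤ (a + k) * #S + a * Fintype.card V := by
  induction C using WellFoundedGT.induction generalizing S with
  | ind C ih =>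
    rcases eq_or_ne C univ with rfl | hCuniv
    · rw [card_univ]
      gcongr
      exact h.isKForcingSet.kForcingNumber_le_card
    · obtain ⟨u, hu, y, hy, huy⟩ :=
        exists_adj_mem_notMem_of_preconnected hG (coe_nonempty.2 hne) (coe_eq_univ.not.2 hCuniv)
      obtain ⟨w, hw, huw⟩ := hC u hu
      obtain ⟨S', hS', hcost⟩ := h.exists_mul_card_add_le hu (hdeg u) hw huw
      have hlt : C < C ∪ G.neighborFinset u :=
        (ssubset_iff_of_subset subset_union_left).2 ⟨y, by simp [huy], hy⟩
      have := ih _ hlt hS' (hne.mono subset_union_left) (hC.union_neighborFinset hu)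
      lia

end KForces

theorem mul_kForcingNumber_add_mul_degree_le (hG : G.Preconnected)
    (hdeg : ∀ x, G.degree x ≤ a + k + 1) (hv : 0 < G.degree v) :
    (a + k) * kForcingNumber G k + a * (1 + G.degree v) ≤
      (a + k) * (1 + (G.degree v - k)) + a * Fintype.card V := by
  obtain ⟨S, hS, hforces⟩ := (KForces.refl G k {v}).exists_card_le (mem_singleton_self v)
  have hdisj : Disjoint {v} (G.neighborFinset v) := by simp
  have hcard : #({v} ∪ G.neighborFinset v) = 1 + G.degree v := by
    rw [card_union_of_disjoint hdisj, card_singleton, G.card_neighborFinset_eq_degree]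
  rw [sdiff_eq_self_of_disjoint hdisj.symm, card_singleton, G.card_neighborFinset_eq_degree] at hS
  calc
    (a + k) * kForcingNumber G k + a * (1 + G.degree v)
      ≤ (a + k) * #S + a * Fintype.card V :=
        hcard ▸ hforces.mul_kForcingNumber_add_mul_card_le hG hdeg ⟨v, by simp⟩
          (noIsolated_singleton_union_neighborFinset hv)
    _ ≤ (a + k) * (1 + (G.degree v - k)) + a * Fintype.card V := by gcongr

end KForcing

theorem kForcingNumber_le_main_general {V : Type*} [Fintype V] [DecidableEq V]
    (G : SimpleGraph V) [DecidableRel G.Adj] (k : ℕ) (hG : G.Preconnected)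
    (hΔ : 1 < G.maxDegree) (hk : k + 1 ≤ G.maxDegree) (v : V) :
    (kForcingNumber G k : ℝ) ≤
      (((G.maxDegree : ℝ) - k - 1) * (Fintype.card V) +
        max ((G.degree v : ℝ) * ((k : ℝ) + 1 - G.maxDegree) + k)
          ((k : ℝ) * ((G.degree v : ℝ) - G.maxDegree + 2))) / ((G.maxDegree : ℝ) - 1) := by
  obtain ⟨a, ha⟩ : ∃ a, G.maxDegree = a + k + 1 := ⟨G.maxDegree - k - 1, by lia⟩
  have : Nonempty V := ⟨v⟩
  have : Nontrivial V := Fintype.one_lt_card_iff_nontrivial.1 (hΔ.trans G.maxDegree_lt_card_verts)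
  have hcount := mul_kForcingNumber_add_mul_degree_le hG
    (fun x ↦ ha ▸ G.degree_le_maxDegree x) (hG.degree_pos_of_nontrivial v)
  have hmax := add_mul_one_add_tsub_le_max a k (G.degree v)
  have hcast : (G.maxDegree : ℝ) = a + k + 1 := by exact_mod_cast ha
  have hpos : (0 : ℝ) < G.maxDegree - 1 := sub_pos.2 (by exact_mod_cast hΔ)
  have hleft : (G.degree v * (k + 1 - G.maxDegree) + k : ℝ) = k - G.degree v * a := by
    rw [hcast]; ring
  have hright : (k * (G.degree v - G.maxDegree + 2) : ℝ) = k * (G.degree v - k - a + 1) := by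
    rw [hcast]; ring
  rify at hcount
  rw [le_div_iff₀ hpos, hleft, hright, hcast]
  linarith

/-- Main theorem (iii): if `G` is connected with `Δ(G) ≥ k + 2`, then
`F_k(G) ≤ ((Δ-k-1)n + max {δ(k+1-Δ)+k, k(δ-Δ+2)}) / (Δ-1)`. -/
theorem kForcingNumber_le_main {V : Type*} [Fintype V] [DecidableEq V]
    (G : SimpleGraph V) [DecidableRel G.Adj] (k : ℕ) (hk : 1 ≤ k)
    (hconn : G.Connected) (hΔ : k + 2 ≤ G.maxDegree) :
    (kForcingNumber G k : ℝ) ≤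
      (((G.maxDegree : ℝ) - k - 1) * (Fintype.card V) +
        max ((G.minDegree : ℝ) * ((k : ℝ) + 1 - G.maxDegree) + k)
          ((k : ℝ) * ((G.minDegree : ℝ) - G.maxDegree + 2))) / ((G.maxDegree : ℝ) - 1) := by
  have := hconn.nonempty
  obtain ⟨v, hv⟩ := G.exists_minimal_degree_vertex
  exact hv ▸ kForcingNumber_le_main_general G k hconn.preconnected (by lia) (by lia) v
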